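/- For every n ≥ 1, the numbers of parity-reversing pairings on [2n] with exactly 4 and exactly 5 crossings are r_{n,4} = 2·C(2n, n−4) and r_{n,5} = 2·C(2n, n−5), with the convention that C(2n, n−ℓ) = 0 when ℓ > n. -/

import Mathlib

open scoped Classical

/-- Asymmetric crossing of two chords: `B = {a,b}` with `a < b` starts strictly
before `C = {c,d}` and they interleave: `a < c < b < d`. -/
def CrossAsym (B C : Finset ℕ) : Prop :=
  ∃ a b c d : ℕ, a < c ∧ c < b ∧ b < d ∧ B = {a, b} ∧ C = {c, d}

/-- Two blocks cross: `a < c < b < d` or `c < a < d < b`. -/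
def Crosses (B C : Finset ℕ) : Prop := CrossAsym B C ∨ CrossAsym C B

/-- A pairing on `[2n] = {1, …, 2n}`: a partition of `{1, …, 2n}` into blocks of size 2. -/
def IsPairing (n : ℕ) (π : Finset (Finset ℕ)) : Prop :=
  (∀ B ∈ π, B.card = 2 ∧ B ⊆ Finset.Icc 1 (2 * n)) ∧
  (∀ x ∈ Finset.Icc 1 (2 * n), ∃! B, B ∈ π ∧ x ∈ B)

/-- Number of crossings of a pairing: the number of unordered pairs of blocks that cross
(each crossing unordered pair `{B, C}` satisfies the asymmetric condition exactly once). -/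
noncomputable def crNum (π : Finset (Finset ℕ)) : ℕ :=
  Set.ncard {p : Finset ℕ × Finset ℕ | p.1 ∈ π ∧ p.2 ∈ π ∧ CrossAsym p.1 p.2}

/-- A pairing is parity-reversing if each block consists of one odd and one even number. -/
def ParityReversing (π : Finset (Finset ℕ)) : Prop :=
  ∀ B ∈ π, ∃ a b : ℕ, B = {a, b} ∧ Odd a ∧ Even b

/-- A pairing is connected if its blocks cannot be split into two nonempty families
with no crossing between the families. -/
def ConnectedPairing (π : Finset (Finset ℕ)) : Prop :=
  ¬ ∃ S T : Finset (Finset ℕ), S ∪ T = π ∧ Disjoint S T ∧ S.Nonempty ∧ T.Nonempty ∧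
      ∀ B ∈ S, ∀ C ∈ T, ¬ Crosses B C

/-- `tCount n k`: the number of pairings on `[2n]` with exactly `k` crossings. -/
noncomputable def tCount (n k : ℕ) : ℕ :=
  Set.ncard {π : Finset (Finset ℕ) | IsPairing n π ∧ crNum π = k}

/-- `rCount n k`: the number of parity-reversing pairings on `[2n]` with exactly `k` crossings. -/
noncomputable def rCount (n k : ℕ) : ℕ :=
  Set.ncard {π : Finset (Finset ℕ) | IsPairing n π ∧ ParityReversing π ∧ crNum π = k}

/-- `bCount n k`: the number of connected parity-reversing pairings on `[2n]`
with exactly `k` crossings. -/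
noncomputable def bCount (n k : ℕ) : ℕ :=
  Set.ncard {π : Finset (Finset ℕ) |
    IsPairing n π ∧ ParityReversing π ∧ ConnectedPairing π ∧ crNum π = k}

/-- `bTot n`: the number of connected parity-reversing pairings on `[2n]` (equals 1 for `n = 0`). -/
noncomputable def bTot (n : ℕ) : ℕ :=
  Set.ncard {π : Finset (Finset ℕ) |
    IsPairing n π ∧ ParityReversing π ∧ ConnectedPairing π}

/-- The Touchard alternating sum `∑_{k=-n}^n (-1)^k q^{k(k-1)/2} C(2n, n+k)`. -/
noncomputable def touchardSum (n : ℕ) (q : ℂ) : ℂ :=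
  ∑ k ∈ Finset.Icc (-(n : ℤ)) (n : ℤ),
    (-1 : ℂ) ^ k * q ^ ((k * (k - 1)) / 2).toNat * ((2 * n).choose ((n : ℤ) + k).toNat : ℂ)

/-- `T_n(q) = ∑_k t_{n,k} q^k` as a complex polynomial function
(all crossing numbers of pairings on `[2n]` satisfy `k ≤ n*n`). -/
noncomputable def Tpoly (n : ℕ) (q : ℂ) : ℂ :=
  ∑ k ∈ Finset.range (n * n + 1), (tCount n k : ℂ) * q ^ k

/-- `T_n(q) = ∑_k t_{n,k} q^k` as a real polynomial function. -/
noncomputable def TpolyR (n : ℕ) (q : ℝ) : ℝ :=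
  ∑ k ∈ Finset.range (n * n + 1), (tCount n k : ℝ) * q ^ k

/-- `R_n(q) = ∑_k r_{n,k} q^k` as a real polynomial function. -/
noncomputable def RpolyR (n : ℕ) (q : ℝ) : ℝ :=
  ∑ k ∈ Finset.range (n * n + 1), (rCount n k : ℝ) * q ^ k

/-- Non-crossing partitions of `{1, …, 2n}` all of whose blocks have even size. -/
noncomputable def NCEvenPartitions (n : ℕ) : Finset (Finset (Finset ℕ)) :=
  ((Finset.Icc 1 (2 * n)).powerset.powerset).filter (fun π =>
    (∀ B ∈ π, B.Nonempty ∧ Even B.card) ∧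
    (∀ x ∈ Finset.Icc 1 (2 * n), ∃! B, B ∈ π ∧ x ∈ B) ∧
    ¬ ∃ a b c d : ℕ, a < b ∧ b < c ∧ c < d ∧
        ∃ B ∈ π, ∃ C ∈ π, B ≠ C ∧ a ∈ B ∧ c ∈ B ∧ b ∈ C ∧ d ∈ C)

/-!
Scan the points from left to right, remembering the open ones, whose partner is still to come.
Matching the next point `x + 1` with the open point that has `i` larger open points above it creates
exactly `i` crossings with blocks closed later, and is allowed iff the two parities differ. Encode
the open points, from the largest down, by the word whose `i`-th letter tells whether `l + x + i` is
even, where `l` is the `i`-th open point: opening a point prepends `true`, while closing the `i`-th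
one removes its letter and flips the `i` letters in front of it. So `rCount n k` counts the
histories of length `2 * n` and total cost `k` that lead from the empty word to itself.

Every letter `false` costs at least half a crossing to remove. Hence for `k ≤ 5` a history of cost
`k` only visits words `true ⋯ true` and `true ⋯ true false false true ⋯ true`, and counting these
amounts to solving linear recursions by numbers of `±1`-walks. From the empty word, the solutions
for `k = 4` and `k = 5` are twice the number of walks of length `2 * n` that end at height `8` and
`10`.
-/

theorem pair_eq_pair_iff_of_lt {α : Type*} [LinearOrder α] {a b c d : α} (hab : a < b)
    (hcd : c < d) : ({a, b} : Finset α) = {c, d} ↔ a = c ∧ b = d := by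
  rw [← Finset.coe_inj, Finset.coe_pair, Finset.coe_pair, Set.pair_eq_pair_iff, or_iff_left]
  rintro ⟨rfl, rfl⟩
  exact hab.asymm hcd

theorem eq_pair_of_card_eq_two {α : Type*} [DecidableEq α] {B : Finset α} (hB : B.card = 2)
    {a b : α} (ha : a ∈ B) (hb : b ∈ B) (hab : a ≠ b) : B = {a, b} :=
  (Finset.eq_of_subset_of_card_le (by simp [Finset.insert_subset_iff, ha, hb])
    (by rw [hB, Finset.card_pair hab])).symm

theorem toFinset_eraseIdx {α : Type*} [DecidableEq α] {L : List α} (hL : L.Nodup) {i : ℕ}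
    (hi : i < L.length) : (L.eraseIdx i).toFinset = L.toFinset.erase L[i] := by
  ext z
  rw [← hL.erase_getElem i hi, List.mem_toFinset, hL.mem_erase_iff, Finset.mem_erase,
    List.mem_toFinset]

/-- `π` is a partition of the finite set `A` into blocks of size 2. -/
structure IsPairingOn (A : Finset ℕ) (π : Finset (Finset ℕ)) : Prop where
  biUnion_id : π.biUnion id = A
  pairwiseDisjoint : (π : Set (Finset ℕ)).PairwiseDisjoint id
  card_eq_two : ∀ B ∈ π, B.card = 2

namespace IsPairingOn

variable {A B : Finset ℕ} {π : Finset (Finset ℕ)}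

theorem subset (h : IsPairingOn A π) (hB : B ∈ π) : B ⊆ A :=
  h.biUnion_id ▸ Finset.subset_biUnion_of_mem id hB

theorem exists_mem (h : IsPairingOn A π) {y : ℕ} (hy : y ∈ A) : ∃ B ∈ π, y ∈ B := by
  simpa [← h.biUnion_id] using hy

theorem eq_of_mem (h : IsPairingOn A π) {C : Finset ℕ} {y : ℕ} (hB : B ∈ π) (hC : C ∈ π)
    (hyB : y ∈ B) (hyC : y ∈ C) : B = C :=
  h.pairwiseDisjoint.elim_finset hB hC y hyB hyC

theorem insert (h : IsPairingOn A π) (hBA : Disjoint B A) (hB : B.card = 2) :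
    IsPairingOn (B ∪ A) (insert B π) where
  biUnion_id := by rw [Finset.biUnion_insert, h.biUnion_id, id]
  pairwiseDisjoint := by
    rw [Finset.coe_insert]
    exact h.pairwiseDisjoint.insert fun C hC _ => hBA.mono_right (h.subset hC)
  card_eq_two := by simpa [hB] using h.card_eq_two

theorem erase (h : IsPairingOn A π) (hB : B ∈ π) : IsPairingOn (A \ B) (π.erase B) where
  biUnion_id := by
    ext y
    simp only [Finset.mem_biUnion, Finset.mem_erase, Finset.mem_sdiff, id]
    constructor
    · rintro ⟨C, ⟨hne, hC⟩, hy⟩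
      exact ⟨h.subset hC hy, fun hyB => hne (h.eq_of_mem hC hB hy hyB)⟩
    · rintro ⟨hy, hyB⟩
      obtain ⟨C, hC, hyC⟩ := h.exists_mem hy
      exact ⟨C, ⟨by rintro rfl; exact hyB hyC, hC⟩, hyC⟩
  pairwiseDisjoint := h.pairwiseDisjoint.subset (by simp)
  card_eq_two C hC := h.card_eq_two C (Finset.mem_of_mem_erase hC)

end IsPairingOn

theorem isPairing_iff_isPairingOn (n : ℕ) (π : Finset (Finset ℕ)) :
    IsPairing n π ↔ IsPairingOn (Finset.Icc 1 (2 * n)) π := by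
  constructor
  · rintro ⟨hblock, hcover⟩
    refine ⟨?_, ?_, fun B hB => (hblock B hB).1⟩
    · refine (Finset.biUnion_subset.2 fun B hB => (hblock B hB).2).antisymm fun y hy => ?_
      obtain ⟨B, ⟨hB, hyB⟩, -⟩ := hcover y hy
      exact Finset.mem_biUnion.2 ⟨B, hB, hyB⟩
    · refine fun B hB C hC hne => Finset.disjoint_left.2 fun y hyB hyC => hne ?_
      exact (hcover y ((hblock B hB).2 hyB)).unique ⟨hB, hyB⟩ ⟨hC, hyC⟩
  · intro h
    refine ⟨fun B hB => ⟨h.card_eq_two B hB, h.subset hB⟩, fun y hy => ?_⟩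
    obtain ⟨B, hB, hyB⟩ := h.exists_mem hy
    exact ⟨B, ⟨hB, hyB⟩, fun C hC => h.eq_of_mem hC.1 hB hC.2 hyB⟩

theorem parityReversing_insert_pair_iff {a b : ℕ} {π : Finset (Finset ℕ)} :
    ParityReversing (insert {a, b} π) ↔ Odd (a + b) ∧ ParityReversing π := by
  rw [ParityReversing, Finset.forall_mem_insert]
  refine and_congr_left fun _ => ⟨?_, fun h => ?_⟩
  · rintro ⟨c, d, h, hc, hd⟩
    rw [← Finset.coe_inj] at h
    push_cast at h
    rcases Set.pair_eq_pair_iff.1 h with ⟨rfl, rfl⟩ | ⟨rfl, rfl⟩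
    · exact hc.add_even hd
    · exact hd.add_odd hc
  · rcases Nat.even_or_odd a with ha | ha
    · exact ⟨b, a, Finset.pair_comm a b, by grind, ha⟩
    · exact ⟨a, b, rfl, ha, by grind⟩

theorem crossAsym_pair_iff {a b c d : ℕ} (hab : a < b) (hcd : c < d) :
    CrossAsym {a, b} {c, d} ↔ a < c ∧ c < b ∧ b < d := by
  constructor
  · rintro ⟨a', b', c', d', hac, hcb, hbd, hB, hC⟩
    obtain ⟨rfl, rfl⟩ := (pair_eq_pair_iff_of_lt hab (hac.trans hcb)).1 hB
    obtain ⟨rfl, rfl⟩ := (pair_eq_pair_iff_of_lt hcd (hcb.trans hbd)).1 hC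
    exact ⟨hac, hcb, hbd⟩
  · rintro ⟨hac, hcb, hbd⟩
    exact ⟨a, b, c, d, hac, hcb, hbd, rfl, rfl⟩

theorem not_crossAsym_self (B : Finset ℕ) : ¬ CrossAsym B B := by
  rintro ⟨a, b, c, d, hac, hcb, hbd, hB, hC⟩
  have := (pair_eq_pair_iff_of_lt (hac.trans hcb) (hcb.trans hbd)).1 (hB.symm.trans hC)
  omega

theorem crNum_eq_card_filter (π : Finset (Finset ℕ)) :
    crNum π = ((π ×ˢ π).filter fun p => CrossAsym p.1 p.2).card := by
  rw [crNum, ← Set.ncard_coe_finset]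
  congr 1
  ext p
  simp [and_assoc]

theorem crNum_insert {B : Finset ℕ} {π : Finset (Finset ℕ)} (hB : B ∉ π)
    (hlast : ∀ C ∈ π, ¬ CrossAsym C B) :
    crNum (insert B π) = crNum π + (π.filter (CrossAsym B)).card := by
  have hsplit : ((insert B π ×ˢ insert B π).filter fun p => CrossAsym p.1 p.2) =
      ((π ×ˢ π).filter fun p => CrossAsym p.1 p.2) ∪
        (π.filter (CrossAsym B)).image (B, ·) := by
    ext ⟨P, Q⟩
    simp only [Finset.mem_filter, Finset.mem_product, Finset.mem_insert, Finset.mem_union,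
      Finset.mem_image, Prod.mk.injEq]
    have := not_crossAsym_self B
    grind
  have hdisj : Disjoint ((π ×ˢ π).filter fun p => CrossAsym p.1 p.2)
      ((π.filter (CrossAsym B)).image (B, ·)) := by
    rw [Finset.disjoint_left]
    grind
  rw [crNum_eq_card_filter, crNum_eq_card_filter, hsplit, Finset.card_union_of_disjoint hdisj,
    Finset.card_image_of_injective _ (Prod.mk_right_injective B)]

/-- The rest of a parity-reversing pairing on `{1, …, N}`, seen after scanning the points up to `x`
with the points of `S` still open: `π` consists of the blocks that end after `x`. -/
structure IsCompletion (S : Finset ℕ) (x N : ℕ) (π : Finset (Finset ℕ)) : Prop extends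
    IsPairingOn (S ∪ Finset.Ioc x N) π where
  parityReversing : ParityReversing π
  exists_lt : ∀ B ∈ π, ∃ y ∈ B, x < y

/-- The number of open points above `y`, which is the number of crossings created when `y` is
closed by the next point. -/
def depth (S : Finset ℕ) (y : ℕ) : ℕ := (S.filter (y < ·)).card

section Scan

variable {S : Finset ℕ} {x y N : ℕ} {π : Finset (Finset ℕ)}

theorem IsCompletion.exists_eq_pair (h : IsCompletion S x N π) {C : Finset ℕ} (hC : C ∈ π) {z : ℕ}
    (hz : z ∈ C) (hzx : z ≤ x) : ∃ w, x < w ∧ C = {z, w} := by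
  obtain ⟨w, hw, hxw⟩ := h.exists_lt C hC
  exact ⟨w, hxw, eq_pair_of_card_eq_two (h.card_eq_two C hC) hz hw (by omega)⟩

theorem IsCompletion.pair_notMem (h : IsCompletion (S.erase y) (x + 1) N π) (hyx : y ≤ x) :
    {y, x + 1} ∉ π := by
  intro hmem
  have := h.subset hmem (Finset.mem_insert_self y _)
  grind

theorem IsCompletion.card_filter_crossAsym (h : IsCompletion (S.erase y) (x + 1) N π)
    (hS : ∀ z ∈ S, z ≤ x) (hy : y ∈ S) :
    (π.filter (CrossAsym {y, x + 1})).card = depth S y := by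
  have hyx := hS y hy
  have hblock : ∀ z ∈ S.filter (y < ·), ∃ C ∈ π, z ∈ C := fun z hz =>
    h.exists_mem (by grind)
  choose! block hmem hz using hblock
  have hpair : ∀ z ∈ S.filter (y < ·), ∃ w, x + 1 < w ∧ block z = {z, w} := fun z hzS =>
    h.exists_eq_pair (hmem z hzS) (hz z hzS) (by grind)
  refine (Finset.card_nbij block ?_ ?_ ?_).symm
  · intro z hzS
    obtain ⟨w, hw, hzw⟩ := hpair z hzS
    rw [Finset.mem_coe, Finset.mem_filter, hzw, crossAsym_pair_iff (by omega) (by grind)]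
    grind
  · intro z hzS z' hzS' heq
    obtain ⟨w, hw, hzw⟩ := hpair z hzS
    obtain ⟨w', hw', hzw'⟩ := hpair z' hzS'
    have : z ≤ x ∧ z' ≤ x := by grind
    rw [hzw, hzw', pair_eq_pair_iff_of_lt (by omega) (by omega)] at heq
    exact heq.1
  · intro C hC
    obtain ⟨hCπ, a, b, c, d, hac, hcb, hbd, hB, rfl⟩ := Finset.mem_filter.1 hC
    obtain ⟨rfl, rfl⟩ := (pair_eq_pair_iff_of_lt (by omega) (hac.trans hcb)).1 hB
    have hcS : c ∈ S.filter (y < ·) := by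
      have := h.subset hCπ (Finset.mem_insert_self c _)
      grind
    exact ⟨c, hcS, h.eq_of_mem (hmem c hcS) hCπ (hz c hcS) (by simp)⟩

theorem IsCompletion.crNum_insert_pair (h : IsCompletion (S.erase y) (x + 1) N π)
    (hS : ∀ z ∈ S, z ≤ x) (hy : y ∈ S) :
    crNum (insert {y, x + 1} π) = crNum π + depth S y := by
  have hyx := hS y hy
  rw [crNum_insert (h.pair_notMem hyx), h.card_filter_crossAsym hS hy]
  rintro C hC ⟨a, b, c, d, hac, hcb, hbd, rfl, hB⟩
  obtain ⟨rfl, rfl⟩ := (pair_eq_pair_iff_of_lt (by omega) (hcb.trans hbd)).1 hB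
  obtain ⟨w, hw, hxw⟩ := h.exists_lt _ hC
  grind

theorem IsCompletion.insert_pair (h : IsCompletion (S.erase y) (x + 1) N π)
    (hS : ∀ z ∈ S, z ≤ x) (hy : y ∈ S) (hxN : x < N) (hodd : Odd (y + (x + 1))) :
    IsCompletion S x N (insert {y, x + 1} π) where
  toIsPairingOn := by
    have hyx := hS y hy
    convert h.insert (B := {y, x + 1}) ?_ (Finset.card_pair (by omega)) using 1
    · ext z
      grind
    · rw [Finset.disjoint_left]
      grind
  parityReversing := parityReversing_insert_pair_iff.2 ⟨hodd, h.parityReversing⟩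
  exists_lt := Finset.forall_mem_insert _ _ _ |>.2 ⟨⟨x + 1, by simp⟩, fun B hB =>
    (h.exists_lt B hB).imp fun w hw => ⟨hw.1, by omega⟩⟩

theorem IsCompletion.erase_pair (h : IsCompletion S x N π)
    (hS : ∀ z ∈ S, z ≤ x) (hy : y ∈ S) (hmem : {y, x + 1} ∈ π) :
    IsCompletion (S.erase y) (x + 1) N (π.erase {y, x + 1}) where
  toIsPairingOn := by
    have hyx := hS y hy
    convert h.erase hmem using 1
    ext z
    grind
  parityReversing B hB := h.parityReversing B (Finset.mem_of_mem_erase hB)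
  exists_lt B hB := by
    obtain ⟨hne, hBπ⟩ := Finset.mem_erase.1 hB
    obtain ⟨w, hwB, hw⟩ := h.exists_lt B hBπ
    have : w ≠ x + 1 := by
      rintro rfl
      exact hne (h.eq_of_mem hBπ hmem hwB (by simp))
    exact ⟨w, hwB, by omega⟩

theorem isCompletion_insert_succ_iff (hS : ∀ z ∈ S, z ≤ x) (hxN : x < N) :
    IsCompletion (insert (x + 1) S) (x + 1) N π ↔
      IsCompletion S x N π ∧ ∀ y ∈ S, {y, x + 1} ∉ π := by
  have hpoints : insert (x + 1) S ∪ Finset.Ioc (x + 1) N = S ∪ Finset.Ioc x N := by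
    ext z
    grind
  constructor
  · intro h
    refine ⟨⟨hpoints ▸ h.toIsPairingOn, h.parityReversing, fun B hB => ?_⟩, fun y hy hmem => ?_⟩
    · obtain ⟨w, hwB, hw⟩ := h.exists_lt B hB
      exact ⟨w, hwB, by omega⟩
    · obtain ⟨w, hwB, hw⟩ := h.exists_lt _ hmem
      grind
  · rintro ⟨h, hopen⟩
    refine ⟨hpoints ▸ h.toIsPairingOn, h.parityReversing, fun B hB => ?_⟩
    by_contra! hle
    obtain ⟨w, hwB, hw⟩ := h.exists_lt B hB
    obtain rfl : w = x + 1 := by grind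
    obtain ⟨z, hzB, hne⟩ := Finset.exists_mem_ne (by rw [h.card_eq_two B hB]; norm_num) (x + 1)
    refine hopen z ?_ (eq_pair_of_card_eq_two (h.card_eq_two B hB) hzB hwB hne ▸ hB)
    have := h.subset hB hzB
    have := hle z hzB
    grind

/-- The completions with exactly `k` crossings among their blocks. -/
noncomputable def completions (S : Finset ℕ) (x N k : ℕ) : Finset (Finset (Finset ℕ)) :=
  (S ∪ Finset.Ioc x N).powerset.powerset.filter fun π => IsCompletion S x N π ∧ crNum π = k

theorem mem_completions {k : ℕ} :
    π ∈ completions S x N k ↔ IsCompletion S x N π ∧ crNum π = k := by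
  rw [completions, Finset.mem_filter, and_iff_right_iff_imp]
  exact fun h => Finset.mem_powerset.2 fun B hB => Finset.mem_powerset.2 (h.1.subset hB)

theorem completions_filter_forall_pair_notMem {k : ℕ} (hS : ∀ z ∈ S, z ≤ x) (hxN : x < N) :
    (completions S x N k).filter (fun π => ∀ y ∈ S, {y, x + 1} ∉ π) =
      completions (insert (x + 1) S) (x + 1) N k := by
  ext π
  rw [Finset.mem_filter, mem_completions, mem_completions, isCompletion_insert_succ_iff hS hxN,
    and_right_comm]

theorem card_completions_filter_pair_mem {k : ℕ} (hS : ∀ z ∈ S, z ≤ x) (hxN : x < N) (hy : y ∈ S) :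
    ((completions S x N k).filter ({y, x + 1} ∈ ·)).card =
      if Odd (y + (x + 1)) ∧ depth S y ≤ k then
        (completions (S.erase y) (x + 1) N (k - depth S y)).card else 0 := by
  have herase : ∀ π ∈ (completions S x N k).filter ({y, x + 1} ∈ ·), Odd (y + (x + 1)) ∧
      depth S y ≤ k ∧
      π.erase {y, x + 1} ∈ completions (S.erase y) (x + 1) N (k - depth S y) := by
    intro π hπ
    rw [Finset.mem_filter, mem_completions] at hπ
    obtain ⟨⟨h, hk⟩, hmem⟩ := hπ
    have hpar := h.parityReversing
    have herased := h.erase_pair hS hy hmem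
    have hcr := herased.crNum_insert_pair hS hy
    rw [← Finset.insert_erase hmem, parityReversing_insert_pair_iff] at hpar
    rw [Finset.insert_erase hmem] at hcr
    exact ⟨hpar.1, by omega, mem_completions.2 ⟨herased, by omega⟩⟩
  split_ifs with hclose
  · refine Finset.card_nbij' (·.erase {y, x + 1}) (insert {y, x + 1} ·)
      (fun π hπ => (herase π hπ).2.2) ?_ ?_ ?_
    · intro π hπ
      obtain ⟨h, hk⟩ := mem_completions.1 hπ
      refine Finset.mem_filter.2 ⟨mem_completions.2 ⟨h.insert_pair hS hy hxN hclose.1, ?_⟩,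
        Finset.mem_insert_self _ _⟩
      rw [h.crNum_insert_pair hS hy]
      omega
    · exact fun π hπ => Finset.insert_erase (Finset.mem_filter.1 hπ).2
    · exact fun π hπ => Finset.erase_insert ((mem_completions.1 hπ).1.pair_notMem (hS y hy))
  · refine Finset.card_eq_zero.2 (Finset.eq_empty_of_forall_notMem fun π hπ => hclose ?_)
    exact ⟨(herase π hπ).1, (herase π hπ).2.1⟩

theorem card_completions_of_lt (hS : ∀ z ∈ S, z ≤ x) (hxN : x < N) (k : ℕ) :
    (completions S x N k).card = (completions (insert (x + 1) S) (x + 1) N k).card +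
      ∑ y ∈ S, if Odd (y + (x + 1)) ∧ depth S y ≤ k then
        (completions (S.erase y) (x + 1) N (k - depth S y)).card else 0 := by
  have hclosed : (completions S x N k).filter (fun π => ¬ ∀ y ∈ S, {y, x + 1} ∉ π) =
      S.biUnion fun y => (completions S x N k).filter ({y, x + 1} ∈ ·) := by
    ext π
    simp only [Finset.mem_filter, Finset.mem_biUnion]
    grind
  have hdisj : (S : Set ℕ).PairwiseDisjoint
      fun y => (completions S x N k).filter ({y, x + 1} ∈ ·) := by
    refine fun y hy z hz hne => Finset.disjoint_left.2 fun π hπy hπz => hne ?_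
    simp only [Finset.mem_filter, mem_completions] at hπy hπz
    have heq := hπy.1.1.eq_of_mem (y := x + 1) hπy.2 hπz.2 (by simp) (by simp)
    exact ((pair_eq_pair_iff_of_lt (by grind) (by grind)).1 heq).1
  rw [← Finset.card_filter_add_card_filter_not (fun π => ∀ y ∈ S, {y, x + 1} ∉ π), hclosed,
    Finset.card_biUnion hdisj, completions_filter_forall_pair_notMem hS hxN]
  congr 1
  exact Finset.sum_congr rfl fun y hy => card_completions_filter_pair_mem hS hxN hy

theorem card_completions_self (hS : ∀ z ∈ S, z ≤ x) (k : ℕ) :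
    (completions S x x k).card = if S = ∅ ∧ k = 0 then 1 else 0 := by
  have hempty : ∀ π, IsCompletion S x x π → π = ∅ := by
    refine fun π h => Finset.eq_empty_of_forall_notMem fun B hB => ?_
    obtain ⟨w, hwB, hw⟩ := h.exists_lt B hB
    have := h.subset hB hwB
    grind
  have hcr : crNum ∅ = 0 := by simp [crNum]
  split_ifs with h
  · obtain ⟨rfl, rfl⟩ := h
    refine Finset.card_eq_one.2 ⟨∅, Finset.eq_singleton_iff_unique_mem.2
      ⟨mem_completions.2 ⟨⟨⟨?_, ?_, ?_⟩, ?_, ?_⟩, hcr⟩, ?_⟩⟩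
    case refine_6 => exact fun π hπ => hempty π (mem_completions.1 hπ).1
    all_goals simp [ParityReversing]
  · refine Finset.card_eq_zero.2 (Finset.eq_empty_of_forall_notMem fun π hπ => h ?_)
    obtain ⟨hπ, hk⟩ := mem_completions.1 hπ
    obtain rfl := hempty π hπ
    exact ⟨by simpa using hπ.biUnion_id.symm, by rw [← hk, hcr]⟩

end Scan

/-- The phase word after closing the open point of depth `i`: the points above it change phase,
since they keep their depth while the scan moves on by one. -/
def closeAt (w : List Bool) (i : ℕ) : List Bool :=
  (w.take i).map (!·) ++ w.drop (i + 1)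

/-- The number of ways to reach the empty phase word from `w` in exactly `m` scanning steps with `k`
crossings. A step opens a point, or closes the one of some depth `i` at the cost of `i` crossings,
provided that its parity fits. -/
def historyCount : ℕ → List Bool → ℕ → ℕ
  | 0, w, k => if w = [] ∧ k = 0 then 1 else 0
  | m + 1, w, k => historyCount m (true :: w) k +
      ∑ i ∈ Finset.range (k + 1),
        if w[i]? = some (decide (Even i)) then historyCount m (closeAt w i) (k - i) else 0

/-- The phases of the open points `L`, listed in decreasing order, after scanning the points up to
`x`. The shift by `i` makes phases agree along alternating parities; the point `x + 1` can close the
`i`-th open point iff the letter at `i` is `decide (Even i)`. -/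
def phaseWord (x : ℕ) (L : List ℕ) : List Bool :=
  L.mapIdx fun i l => decide (Even (l + x + i))

theorem phaseWord_succ_cons (x : ℕ) (L : List ℕ) :
    phaseWord (x + 1) ((x + 1) :: L) = true :: phaseWord x L := by
  grind [phaseWord]

theorem closeAt_phaseWord (x : ℕ) (L : List ℕ) (i : ℕ) :
    closeAt (phaseWord x L) i = phaseWord (x + 1) (L.eraseIdx i) := by
  refine List.ext_getElem? fun j => ?_
  grind [closeAt, phaseWord]

theorem phaseWord_getElem?_eq_some_iff {x i : ℕ} {L : List ℕ} (hi : i < L.length) :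
    (phaseWord x L)[i]? = some (decide (Even i)) ↔ Odd (L[i] + (x + 1)) := by
  grind [phaseWord]

theorem depth_getElem {L : List ℕ} (hL : L.SortedGT) {i : ℕ} (hi : i < L.length) :
    depth L.toFinset L[i] = i := by
  have hfilter : L.toFinset.filter (L[i] < ·) = (L.take i).toFinset := by
    ext z
    simp only [Finset.mem_filter, List.mem_toFinset, List.mem_take_iff_getElem, lt_min_iff]
    constructor
    · rintro ⟨hz, hlt⟩
      obtain ⟨j, hj, rfl⟩ := List.getElem_of_mem hz
      exact ⟨j, ⟨hL.getElem_lt_getElem_iff.1 hlt, hj⟩, rfl⟩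
    · rintro ⟨j, ⟨hji, hj⟩, rfl⟩
      exact ⟨List.getElem_mem hj, hL.getElem_lt_getElem_iff.2 hji⟩
  rw [depth, hfilter, List.toFinset_card_of_nodup (hL.nodup.sublist (List.take_sublist i L)),
    List.length_take_of_le hi.le]

theorem sum_depth_eq_sum_range {L : List ℕ} (hL : L.SortedGT) (g : ℕ → ℕ) (x k : ℕ) :
    (∑ y ∈ L.toFinset, if Odd (y + (x + 1)) ∧ depth L.toFinset y ≤ k then
        g (depth L.toFinset y) else 0) =
      ∑ i ∈ Finset.range (k + 1),
        if (phaseWord x L)[i]? = some (decide (Even i)) then g i else 0 := by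
  rw [← Finset.sum_filter, ← Finset.sum_filter]
  refine Finset.sum_nbij (depth L.toFinset) ?_ ?_ ?_ fun _ _ => rfl
  · intro y hy
    obtain ⟨hyL, hodd, hk⟩ := Finset.mem_filter.1 hy
    obtain ⟨i, hi, rfl⟩ := List.getElem_of_mem (List.mem_toFinset.1 hyL)
    rw [depth_getElem hL hi] at hk ⊢
    exact Finset.mem_filter.2
      ⟨Finset.mem_range_succ_iff.2 hk, (phaseWord_getElem?_eq_some_iff hi).2 hodd⟩
  · intro y hy z hz heq
    obtain ⟨i, hi, rfl⟩ := List.getElem_of_mem (List.mem_toFinset.1 (Finset.mem_filter.1 hy).1)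
    obtain ⟨j, hj, rfl⟩ := List.getElem_of_mem (List.mem_toFinset.1 (Finset.mem_filter.1 hz).1)
    simp only [depth_getElem hL] at heq
    simp only [heq]
  · intro i hi
    obtain ⟨hik, hclose⟩ := Finset.mem_filter.1 hi
    have hiL : i < L.length := by
      simpa [phaseWord] using (List.getElem?_eq_some_iff.1 hclose).1
    refine ⟨L[i], Finset.mem_filter.2 ⟨by simp, ?_, ?_⟩, depth_getElem hL hiL⟩
    · exact (phaseWord_getElem?_eq_some_iff hiL).1 hclose
    · rw [depth_getElem hL hiL]
      exact Finset.mem_range_succ_iff.1 hik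

theorem card_completions_toFinset (m : ℕ) {L : List ℕ} (hL : L.SortedGT) {x : ℕ}
    (hx : ∀ y ∈ L, y ≤ x) (k : ℕ) :
    (completions L.toFinset x (x + m) k).card = historyCount m (phaseWord x L) k := by
  induction m generalizing L x k with
  | zero =>
    rw [add_zero, card_completions_self (by simpa using hx), historyCount]
    simp [phaseWord]
  | succ m ih =>
    have hopen : ((x + 1) :: L).SortedGT := by
      rw [List.sortedGT_iff_pairwise, List.pairwise_cons]
      exact ⟨fun y hy => Nat.lt_succ_of_le (hx y hy), hL.pairwise⟩
    have hcardOpen := ih hopen (x := x + 1) (by grind) k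
    have hcardClose : ∀ y ∈ L.toFinset,
        (completions (L.toFinset.erase y) (x + 1) (x + 1 + m) (k - depth L.toFinset y)).card =
          historyCount m (closeAt (phaseWord x L) (depth L.toFinset y))
            (k - depth L.toFinset y) := by
      intro y hy
      obtain ⟨i, hi, rfl⟩ := List.getElem_of_mem (List.mem_toFinset.1 hy)
      rw [depth_getElem hL hi, closeAt_phaseWord, ← toFinset_eraseIdx hL.nodup hi]
      refine ih ?_ (fun y hy => ?_) _
      · exact (hL.pairwise.sublist (List.eraseIdx_sublist L i)).sortedGT
      · exact (hx y (List.mem_of_mem_eraseIdx hy)).trans (Nat.le_succ x)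
    rw [← add_assoc, add_right_comm, card_completions_of_lt (by simpa using hx) (by omega),
      ← List.toFinset_cons, hcardOpen, phaseWord_succ_cons, historyCount,
      ← sum_depth_eq_sum_range hL
        (fun i => historyCount m (closeAt (phaseWord x L) i) (k - i))]
    congr 1
    exact Finset.sum_congr rfl fun y hy => by rw [hcardClose y hy]

theorem rCount_eq_historyCount (n k : ℕ) : rCount n k = historyCount (2 * n) [] k := by
  have hset : {π | IsPairing n π ∧ ParityReversing π ∧ crNum π = k} =
      (completions ∅ 0 (2 * n) k : Set (Finset (Finset ℕ))) := by
    have hpoints : Finset.Icc 1 (2 * n) = ∅ ∪ Finset.Ioc 0 (2 * n) := by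
      ext
      grind
    ext π
    rw [Set.mem_ofPred_eq, Finset.mem_coe, mem_completions, isPairing_iff_isPairingOn, hpoints,
      ← and_assoc]
    refine and_congr_left fun _ => ⟨fun h => ⟨h.1, h.2, fun B hB => ?_⟩, fun h =>
      ⟨h.toIsPairingOn, h.parityReversing⟩⟩
    obtain ⟨y, hy⟩ := Finset.card_pos.1 ((h.1.card_eq_two B hB).symm ▸ zero_lt_two)
    have := h.1.subset hB hy
    exact ⟨y, hy, by grind⟩
  rw [rCount, hset, Set.ncard_coe_finset]
  simpa [phaseWord] using
    card_completions_toFinset (2 * n) List.Pairwise.nil.sortedGT (x := 0) (by simp) k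

theorem count_false_le_count_closeAt_add {w : List Bool} {i : ℕ}
    (hi : w[i]? = some (decide (Even i))) :
    w.count false ≤ (closeAt w i).count false + 2 * i := by
  obtain ⟨hlt, hget⟩ := List.getElem?_eq_some_iff.1 hi
  have hsplit : w = w.take i ++ w[i] :: w.drop (i + 1) := by simp
  have htake : (w.take i).count false ≤ i := List.count_le_length.trans (by simp)
  have hcount := congrArg (List.count false) hsplit
  rw [List.count_append, List.count_cons, hget] at hcount
  rw [closeAt, List.count_append, hcount]
  rcases Nat.eq_zero_or_pos i with rfl | hpos
  · simp
  · split_ifs <;> omega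

theorem historyCount_eq_zero (m : ℕ) {w : List Bool} {k : ℕ} (h : 2 * k < w.count false) :
    historyCount m w k = 0 := by
  induction m generalizing w k with
  | zero =>
    have hw : w ≠ [] := by rintro rfl; simp at h
    simp [historyCount, hw]
  | succ m ih =>
    rw [historyCount, ih (by simpa using h), zero_add]
    refine Finset.sum_eq_zero fun i hi => ?_
    split_ifs with hclose
    · have := count_false_le_count_closeAt_add hclose
      have := Finset.mem_range.1 hi
      exact ih (by omega)
    · rfl

/-- The phase word of `a` open points of alternating parities. -/
def inPhaseWord (a : ℕ) : List Bool := List.replicate a true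

/-- The phase word whose only letters `false` are two adjacent ones, with `b` letters above and `a`
letters below them. -/
def twoDefectWord (b a : ℕ) : List Bool :=
  List.replicate b true ++ false :: false :: List.replicate a true

theorem historyCount_succ_inPhaseWord {k : ℕ} (hk : k ≤ 5) (m a : ℕ) :
    historyCount (m + 1) (inPhaseWord a) k = historyCount m (inPhaseWord (a + 1)) k +
      (if 1 ≤ a then historyCount m (inPhaseWord (a - 1)) k else 0) +
      if 3 ≤ a ∧ 2 ≤ k then historyCount m (twoDefectWord 0 (a - 3)) (k - 2) else 0 := by
  rw [historyCount, add_assoc]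
  congr 1
  obtain _ | _ | _ | _ | _ | a := a <;> interval_cases k <;>
    simp [Finset.sum_range_succ, Nat.even_add_one, closeAt, inPhaseWord, twoDefectWord,
      List.replicate_succ, List.getElem?_replicate, historyCount_eq_zero]

theorem historyCount_succ_twoDefectWord_zero {k : ℕ} (hk : k ≤ 3) (m a : ℕ) :
    historyCount (m + 1) (twoDefectWord 0 a) k = historyCount m (twoDefectWord 1 a) k +
      (if 1 ≤ k then historyCount m (inPhaseWord (a + 1)) (k - 1) else 0) +
      if 1 ≤ a ∧ 2 ≤ k then historyCount m (inPhaseWord (a + 1)) (k - 2) else 0 := by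
  rw [historyCount, add_assoc]
  congr 1
  obtain _ | _ | a := a <;> interval_cases k <;>
    simp [Finset.sum_range_succ, Nat.even_add_one, closeAt, inPhaseWord, twoDefectWord,
      List.replicate_succ]

theorem historyCount_succ_twoDefectWord_one {k : ℕ} (hk : k ≤ 3) (m a : ℕ) :
    historyCount (m + 1) (twoDefectWord 1 a) k = historyCount m (twoDefectWord 2 a) k +
      historyCount m (twoDefectWord 0 a) k +
      if 1 ≤ k then historyCount m (twoDefectWord 0 a) (k - 1) else 0 := by
  rw [historyCount, add_assoc]
  congr 1
  obtain _ | a := a <;> interval_cases k <;>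
    simp [Finset.sum_range_succ, Nat.even_add_one, closeAt, twoDefectWord,
      List.replicate_succ]

theorem historyCount_succ_twoDefectWord_add_two {k : ℕ} (hk : k ≤ 3) (m b a : ℕ) :
    historyCount (m + 1) (twoDefectWord (b + 2) a) k =
      historyCount m (twoDefectWord (b + 3) a) k + historyCount m (twoDefectWord (b + 1) a) k := by
  rw [historyCount]
  congr 1
  obtain _ | _ | b := b <;> interval_cases k <;>
    simp [Finset.sum_range_succ, Nat.even_add_one, closeAt, twoDefectWord,
      List.replicate_succ, historyCount_eq_zero]

/-- The number of walks with `m` steps `±1` from `0` to `h`. -/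
def walkCount : ℕ → ℤ → ℤ
  | 0, h => if h = 0 then 1 else 0
  | m + 1, h => walkCount m (h - 1) + walkCount m (h + 1)

theorem walkCount_neg (m : ℕ) (h : ℤ) : walkCount m (-h) = walkCount m h := by
  induction m generalizing h with
  | zero => simp [walkCount]
  | succ m ih =>
    rw [walkCount, walkCount, ← ih (h - 1), ← ih (h + 1), add_comm]
    ring_nf

theorem walkCount_eq_zero_of_lt {m : ℕ} {h : ℤ} (hm : m < h) : walkCount m h = 0 := by
  induction m generalizing h with
  | zero => exact if_neg hm.ne'
  | succ m ih =>
    push_cast at hm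
    rw [walkCount, ih (by omega), ih (by omega), add_zero]

theorem walkCount_sub_two_mul (m j : ℕ) : walkCount m (m - 2 * j) = m.choose j := by
  induction m generalizing j with
  | zero => cases j <;> simp [walkCount]; omega
  | succ m ih =>
    rw [walkCount]
    cases j with
    | zero =>
      have hend := ih 0
      rw [walkCount_eq_zero_of_lt (h := _ + 1) (by push_cast; omega)]
      simpa using hend
    | succ j =>
      rw [Nat.choose_succ_succ]
      push_cast
      rw [← ih j, ← ih (j + 1), add_comm]
      push_cast
      ring_nf

theorem walkCount_two_mul (n c : ℕ) :
    walkCount (2 * n) (2 * c) = if c ≤ n then ((2 * n).choose (n - c) : ℤ) else 0 := by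
  split_ifs with h
  · rw [← walkCount_sub_two_mul]
    congr 1
    push_cast [h]
    ring
  · exact walkCount_eq_zero_of_lt (by push_cast; omega)

/-- The ballot number, extended to all integers `h` by reflection: for `-1 ≤ h` it counts the walks
with `m` steps `±1` from `h` to `0` that never become negative. -/
def ballotCount (m : ℕ) (h : ℤ) : ℤ := walkCount m h - walkCount m (h + 2)

theorem ballotCount_succ (m : ℕ) (h : ℤ) :
    ballotCount (m + 1) h = ballotCount m (h - 1) + ballotCount m (h + 1) := by
  simp only [ballotCount, walkCount]
  ring_nf

theorem ballotCount_neg_one (m : ℕ) : ballotCount m (-1) = 0 := by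
  simp [ballotCount, walkCount_neg]

theorem ballotCount_zero_of_pos {h : ℤ} (hh : 0 < h) : ballotCount 0 h = 0 := by
  simp [ballotCount, walkCount, hh.ne', show h + 2 ≠ 0 by omega]

theorem historyCount_inPhaseWord_zero (m a : ℕ) :
    (historyCount m (inPhaseWord a) 0 : ℤ) = ballotCount m a := by
  induction m generalizing a with
  | zero =>
    obtain _ | a := a
    · simp [historyCount, inPhaseWord, ballotCount, walkCount]
    · rw [ballotCount_zero_of_pos (by positivity)]
      simp [historyCount, inPhaseWord]
  | succ m ih =>
    rw [historyCount_succ_inPhaseWord (by norm_num), ballotCount_succ]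
    obtain _ | a := a
    · simp [ih, ballotCount_neg_one]
    · simp [ih, add_comm]

theorem historyCount_inPhaseWord_eq_zero {k : ℕ} (hk : k = 1 ∨ k = 2) (m a : ℕ) :
    historyCount m (inPhaseWord a) k = 0 := by
  induction m generalizing a with
  | zero =>
    have : k ≠ 0 := by omega
    simp [historyCount, this]
  | succ m ih =>
    have hdefect : historyCount m (twoDefectWord 0 (a - 3)) (k - 2) = 0 :=
      historyCount_eq_zero m (by simp [twoDefectWord]; omega)
    simp [historyCount_succ_inPhaseWord (show k ≤ 5 by omega), ih, hdefect]

theorem historyCount_twoDefectWord_one (m b a : ℕ) :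
    (historyCount m (twoDefectWord b a) 1 : ℤ) = ballotCount m (a + b + 2) := by
  induction m generalizing b a with
  | zero =>
    rw [ballotCount_zero_of_pos (by positivity)]
    simp [historyCount]
  | succ m ih =>
    rw [ballotCount_succ]
    obtain _ | _ | b := b
    · rw [historyCount_succ_twoDefectWord_zero (by norm_num)]
      grind [historyCount_inPhaseWord_zero]
    · have hdefect : historyCount m (twoDefectWord 0 a) 0 = 0 :=
        historyCount_eq_zero m (by simp [twoDefectWord])
      rw [historyCount_succ_twoDefectWord_one (by norm_num)]
      grind
    · rw [historyCount_succ_twoDefectWord_add_two (by norm_num)]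
      grind

theorem historyCount_twoDefectWord_two (m b a : ℕ) :
    (historyCount m (twoDefectWord b a) 2 : ℤ) =
      ((if 1 ≤ a then 1 else 0) + (if 1 ≤ b then 1 else 0)) * ballotCount m (a + b + 2) +
        ballotCount m (a + b + 4) := by
  induction m generalizing b a with
  | zero =>
    rw [ballotCount_zero_of_pos (by positivity), ballotCount_zero_of_pos (by positivity)]
    simp [historyCount]
  | succ m ih =>
    rw [ballotCount_succ, ballotCount_succ]
    obtain _ | _ | b := b
    · rw [historyCount_succ_twoDefectWord_zero (by norm_num)]
      obtain _ | a := a <;> grind [historyCount_inPhaseWord_zero, historyCount_inPhaseWord_eq_zero]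
    · rw [historyCount_succ_twoDefectWord_one (by norm_num)]
      obtain _ | a := a <;> grind [historyCount_twoDefectWord_one]
    · rw [historyCount_succ_twoDefectWord_add_two (by norm_num)]
      grind

theorem historyCount_twoDefectWord_three (m b a : ℕ) :
    (historyCount m (twoDefectWord b a) 3 : ℤ) =
      (if 1 ≤ a ∧ 1 ≤ b then 1 else 0) * ballotCount m (a + b + 2) +
        ((if 1 ≤ a then 1 else 0) + (if 1 ≤ b then 1 else 0)) * ballotCount m (a + b + 4) +
        ballotCount m (a + b + 6) := by
  induction m generalizing b a with
  | zero =>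
    rw [ballotCount_zero_of_pos (by positivity), ballotCount_zero_of_pos (by positivity),
      ballotCount_zero_of_pos (by positivity)]
    simp [historyCount]
  | succ m ih =>
    rw [ballotCount_succ, ballotCount_succ, ballotCount_succ]
    obtain _ | _ | b := b
    · rw [historyCount_succ_twoDefectWord_zero (by norm_num)]
      grind [historyCount_inPhaseWord_eq_zero]
    · rw [historyCount_succ_twoDefectWord_one (by norm_num)]
      have hclose := historyCount_twoDefectWord_two m 0 a
      obtain _ | a := a <;> grind
    · rw [historyCount_succ_twoDefectWord_add_two (by norm_num)]
      grind

/-- Closed form for `historyCount m (inPhaseWord a) k`, with `c = 0` for `k = 4` and `c = 2` for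
`k = 5`. -/
def inPhaseFormula (c m a : ℕ) : ℤ :=
  2 * ∑ j ∈ Finset.range 4, (if j ≤ a then walkCount m (c + a + 8 - 2 * j) else 0) +
    (a - 3 : ℕ) * (walkCount m (c + a) + walkCount m (c + a + 2))

theorem inPhaseFormula_zero (c a : ℕ) : inPhaseFormula c 0 a = 0 := by
  simp only [inPhaseFormula, walkCount, Finset.sum_range_succ, Finset.sum_range_zero]
  grind

theorem inPhaseFormula_succ (c m a : ℕ) :
    inPhaseFormula c (m + 1) a = inPhaseFormula c m (a + 1) +
      (if 1 ≤ a then inPhaseFormula c m (a - 1) else 0) +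
      if 3 ≤ a then
        (if 4 ≤ a then 1 else 0) * ballotCount m (c + a - 1) + ballotCount m (c + a + 1)
      else 0 := by
  simp only [inPhaseFormula, walkCount, ballotCount, Finset.sum_range_succ, Finset.sum_range_zero]
  obtain _ | _ | _ | _ | a := a <;> grind

theorem historyCount_inPhaseWord_four (m a : ℕ) :
    (historyCount m (inPhaseWord a) 4 : ℤ) = inPhaseFormula 0 m a := by
  induction m generalizing a with
  | zero => simp [historyCount, inPhaseFormula_zero]
  | succ m ih =>
    rw [inPhaseFormula_succ, historyCount_succ_inPhaseWord (by norm_num)]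
    have hdefect := historyCount_twoDefectWord_two m 0 (a - 3)
    obtain _ | _ | _ | a := a <;> grind

theorem historyCount_inPhaseWord_five (m a : ℕ) :
    (historyCount m (inPhaseWord a) 5 : ℤ) = inPhaseFormula 2 m a := by
  induction m generalizing a with
  | zero => simp [historyCount, inPhaseFormula_zero]
  | succ m ih =>
    rw [inPhaseFormula_succ, historyCount_succ_inPhaseWord (by norm_num)]
    have hdefect := historyCount_twoDefectWord_three m 0 (a - 3)
    obtain _ | _ | _ | a := a <;> grind

theorem inPhaseFormula_two_mul_zero (c n : ℕ) :
    inPhaseFormula (2 * c) (2 * n) 0 =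
      2 * (if c + 4 ≤ n then (2 * n).choose (n - (c + 4)) else 0 : ℕ) := by
  have hwalk := walkCount_two_mul n (c + 4)
  simp only [inPhaseFormula, Finset.sum_range_succ, Finset.sum_range_zero]
  grind

/-- `r_{n,4} = 2·C(2n, n−4)` and `r_{n,5} = 2·C(2n, n−5)`, with the convention that the
binomial coefficient is `0` when `4 > n` (resp. `5 > n`). -/
theorem rCount_four_five (n : ℕ) (hn : 1 ≤ n) :
    rCount n 4 = 2 * (if 4 ≤ n then (2 * n).choose (n - 4) else 0) ∧
    rCount n 5 = 2 * (if 5 ≤ n then (2 * n).choose (n - 5) else 0) := by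
  simp only [rCount_eq_historyCount]
  have hfour := historyCount_inPhaseWord_four (2 * n) 0
  have hfive := historyCount_inPhaseWord_five (2 * n) 0
  rw [inPhaseFormula_two_mul_zero 0] at hfour
  rw [inPhaseFormula_two_mul_zero 1] at hfive
  exact ⟨mod_cast hfour, mod_cast hfive⟩
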